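/- Let k be a field, R a commutative k-algebra with k-algebra automorphism σ, and Q = R[t^{±1}; σ]. If A = ⊕_{m≥0} V_m t^m is a big locally finite ℕ-graded subalgebra of Q, then for every n ≥ 1 the Veronese subalgebra A^{(n)} = ⊕_{j≥0} V_{jn} t^{jn}, regarded as an ℕ-graded subalgebra of Q^{(n)} = R[(t^n)^{±1}; σ^n] (with degree-j component V_{jn}·(t^n)^j), is a big subalgebra of Q^{(n)}. (Claim in the proof of Proposition 1.3.) -/

import Mathlib

/-!
Let `m ≥ 1` and `u ∈ V_m` be the degree and the unit witnessing that `A` is big. The `(n - 1)`-st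
power of `ι u * t ^ m` is `ι v * t ^ (m (n - 1))` for a unit `v` of `R`, so multiplying an element
`ι r * t ^ m` of `A` by it gives `r * σ ^ m (v) ∈ V_{mn}` for every `r ∈ V_m`; in particular
`w = u * σ ^ m (v)` is a unit of `R` in `V_{mn}`. Hence `V_m u⁻¹ ⊆ V_{mn} w⁻¹`, and
`k[V_m u⁻¹] ⊆ k[V_{mn} w⁻¹] ⊆ R`. A ring lying between `k[V_m u⁻¹]` and its localization `R` again
has `R` as a localization, at the image of the same multiplicative set
(`exists_isLocalization_of_le`). So `w`, of degree `m` in `Q^{(n)}`, witnesses that the Veronese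
is big.
-/

open Filter

/-- GK dimension of a `k`-algebra `B`, valued in `ℝ≥0∞`. -/
noncomputable def gkDim (k B : Type*) [Field k] [Ring B] [Algebra k B] : ENNReal :=
  ⨆ (V : Submodule k B) (_ : FiniteDimensional k V),
    Filter.limsup (fun n : ℕ =>
      ENNReal.ofReal (Real.log (Module.finrank k ↥(V ^ n) : ℝ) / Real.log (n : ℝ)))
      Filter.atTop

/-- `B` has exponential growth. -/
def HasExpGrowth (k B : Type*) [Field k] [Ring B] [Algebra k B] : Prop :=
  1 < ⨆ (V : Submodule k B) (_ : FiniteDimensional k V),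
    Filter.limsup (fun n : ℕ =>
      ENNReal.ofReal ((Module.finrank k ↥(V ^ n) : ℝ) ^ ((n : ℝ)⁻¹))) Filter.atTop

/-- degree-`n` component `ι(R)·tⁿ` of the skew Laurent ring. -/
noncomputable def laurentComp {k R Q : Type*} [Field k] [Ring R] [Algebra k R]
    [Ring Q] [Algebra k Q] (ι : R →ₐ[k] Q) (t : Qˣ) (n : ℤ) : Submodule k Q :=
  LinearMap.range ((LinearMap.mulRight k ((t ^ n : Qˣ) : Q)).comp ι.toLinearMap)

/-- coefficient space `V_n = {r : R | ι(r) tⁿ ∈ A}` of a subalgebra. -/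
noncomputable def coeffSpace {k R Q : Type*} [Field k] [Ring R] [Algebra k R]
    [Ring Q] [Algebra k Q] (ι : R →ₐ[k] Q) (t : Qˣ) (A : Subalgebra k Q) (n : ℤ) :
    Submodule k R :=
  Submodule.comap ((LinearMap.mulRight k ((t ^ n : Qˣ) : Q)).comp ι.toLinearMap)
    A.toSubmodule

/-- `Q` is the skew Laurent polynomial ring `R[t^{±1}; σ]` via the embedding `ι`. -/
structure IsSkewLaurent (k : Type*) {R Q : Type*} [Field k] [Ring R] [Algebra k R]
    [Ring Q] [Algebra k Q] (σ : R ≃ₐ[k] R) (ι : R →ₐ[k] Q) (t : Qˣ) : Prop where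
  twist : ∀ r : R, (t : Q) * ι r = ι (σ r) * (t : Q)
  basis : ∀ q : Q, ∃! f : ℤ →₀ R, q = f.sum fun n r => ι r * ((t ^ n : Qˣ) : Q)

section Graded

variable {k R Q : Type*} [Field k] [Ring R] [Algebra k R] [Ring Q] [Algebra k Q]

/-- `A` is a graded subalgebra of `Q`: `A = ⊕ₙ (A ∩ Qₙ)`. -/
def IsGradedSub (ι : R →ₐ[k] Q) (t : Qˣ) (A : Subalgebra k Q) : Prop :=
  A.toSubmodule = ⨆ n : ℤ, (A.toSubmodule ⊓ laurentComp ι t n)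

/-- `A` is an ℕ-graded subalgebra of `Q`. -/
def IsNGradedSub (ι : R →ₐ[k] Q) (t : Qˣ) (A : Subalgebra k Q) : Prop :=
  IsGradedSub ι t A ∧ ∀ n : ℤ, n < 0 → A.toSubmodule ⊓ laurentComp ι t n = ⊥

/-- `A` is locally finite. -/
def IsLocFin (ι : R →ₐ[k] Q) (t : Qˣ) (A : Subalgebra k Q) : Prop :=
  ∀ n : ℤ, FiniteDimensional k ↥(A.toSubmodule ⊓ laurentComp ι t n)

/-- `A` is finitely graded: ℕ-graded, locally finite, finitely generated. -/
def IsFinGraded (ι : R →ₐ[k] Q) (t : Qˣ) (A : Subalgebra k Q) : Prop :=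
  IsNGradedSub ι t A ∧ IsLocFin ι t A ∧ A.FG

/-- `A` is connected: `A₀ = k·1`. -/
def IsConnectedSub (ι : R →ₐ[k] Q) (t : Qˣ) (A : Subalgebra k Q) : Prop :=
  A.toSubmodule ⊓ laurentComp ι t 0 = (1 : Submodule k Q)

end Graded

section Big

variable {k R Q : Type*} [Field k] [CommRing R] [Algebra k R] [Ring Q] [Algebra k Q]

/-- `A` is a big (locally finite ℕ-graded) subalgebra of `Q = R[t^{±1};σ]`. -/
def IsBigSub (ι : R →ₐ[k] Q) (t : Qˣ) (A : Subalgebra k Q) : Prop :=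
  IsNGradedSub ι t A ∧ IsLocFin ι t A ∧
  ∃ n : ℤ, 1 ≤ n ∧ ∃ u : Rˣ, (u : R) ∈ coeffSpace ι t A n ∧
    ∃ M : Submonoid (Algebra.adjoin k
        ((fun r => r * ((u⁻¹ : Rˣ) : R)) '' ↑(coeffSpace ι t A n))),
      M ≤ nonZeroDivisors _ ∧ IsLocalization M R

end Big

section VeroneseAux

/-- If `R` is a localization of `B` at nonzerodivisors and `B ≤ B' ≤ R`, then `R` is a localization
of `B'` at nonzerodivisors. -/
lemma exists_isLocalization_of_le {k R : Type*} [Field k] [CommRing R] [Algebra k R]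
    {B B' : Subalgebra k R} (h : B ≤ B') (M : Submonoid B) [IsLocalization M R] :
    ∃ M' : Submonoid B', M' ≤ nonZeroDivisors B' ∧ IsLocalization M' R := by
  have hu : ∀ s ∈ M.map (Subalgebra.inclusion h), IsUnit (s : R) := by
    rintro _ ⟨s, hs, rfl⟩
    exact IsLocalization.map_units R (⟨s, hs⟩ : M)
  refine ⟨M.map (Subalgebra.inclusion h), fun s hs => ?_, ?_⟩
  · rw [mem_nonZeroDivisors_iff_right]
    intro x hx
    have hx' : (x : R) * (s : R) = 0 := by exact_mod_cast congrArg Subtype.val hx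
    exact Subtype.ext ((hu s hs).mul_left_eq_zero.mp hx')
  · refine ⟨⟨fun s => hu s.1 s.2, fun z => ?_, fun {x y} hxy => ?_⟩⟩
    · obtain ⟨⟨a, s⟩, has⟩ := IsLocalization.surj M z
      exact ⟨⟨Subalgebra.inclusion h a, ⟨_, s.1, s.2, rfl⟩⟩, has⟩
    · exact ⟨1, by rw [Subtype.ext hxy]⟩

variable {k R Q : Type*} [Field k] [Ring R] [Algebra k R] [Ring Q] [Algebra k Q]

lemma mem_laurentComp {ι : R →ₐ[k] Q} {t : Qˣ} {n : ℤ} {x : Q} :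
    x ∈ laurentComp ι t n ↔ ∃ r, ι r * ((t ^ n : Qˣ) : Q) = x := Iff.rfl

lemma mem_coeffSpace {ι : R →ₐ[k] Q} {t : Qˣ} {A : Subalgebra k Q} {n : ℤ} {r : R} :
    r ∈ coeffSpace ι t A n ↔ ι r * ((t ^ n : Qˣ) : Q) ∈ A := Iff.rfl

lemma laurentComp_pow (ι : R →ₐ[k] Q) (t : Qˣ) (n : ℕ) (j : ℤ) :
    laurentComp ι (t ^ n) j = laurentComp ι t (j * n) := by
  rw [laurentComp, laurentComp, ← zpow_natCast t n, ← zpow_mul, mul_comm]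

lemma IsSkewLaurent.twist_pow {σ : R ≃ₐ[k] R} {ι : R →ₐ[k] Q} {t : Qˣ}
    (hQ : IsSkewLaurent k σ ι t) (a : ℕ) (r : R) :
    ((t ^ (a : ℤ) : Qˣ) : Q) * ι r = ι ((σ ^ a) r) * ((t ^ (a : ℤ) : Qˣ) : Q) := by
  induction a generalizing r with
  | zero => simp
  | succ a ih =>
    simp only [zpow_natCast, Units.val_pow_eq_pow_val] at ih ⊢
    rw [pow_succ, mul_assoc, hQ.twist, ← mul_assoc, ih, mul_assoc, pow_succ σ, AlgEquiv.mul_apply]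

/-- The product formula `(r tᵃ)(s tᵇ) = r σᵃ(s) tᵃ⁺ᵇ`. -/
lemma IsSkewLaurent.mul_mul {σ : R ≃ₐ[k] R} {ι : R →ₐ[k] Q} {t : Qˣ}
    (hQ : IsSkewLaurent k σ ι t) (a : ℕ) (b : ℤ) (r s : R) :
    ι r * ((t ^ (a : ℤ) : Qˣ) : Q) * (ι s * ((t ^ b : Qˣ) : Q)) =
      ι (r * (σ ^ a) s) * ((t ^ ((a : ℤ) + b) : Qˣ) : Q) := by
  rw [mul_assoc, ← mul_assoc _ (ι s), hQ.twist_pow, map_mul, zpow_add, Units.val_mul]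
  simp only [mul_assoc]

lemma IsSkewLaurent.exists_unit_pow {σ : R ≃ₐ[k] R} {ι : R →ₐ[k] Q} {t : Qˣ}
    (hQ : IsSkewLaurent k σ ι t) (m : ℕ) (u : Rˣ) (i : ℕ) :
    ∃ v : Rˣ, (ι u * ((t ^ (m : ℤ) : Qˣ) : Q)) ^ i =
      ι v * ((t ^ ((m : ℤ) * i) : Qˣ) : Q) := by
  induction i with
  | zero => exact ⟨1, by simp⟩
  | succ i ih =>
    obtain ⟨v, hv⟩ := ih
    refine ⟨u * Units.map ((σ ^ m : R ≃ₐ[k] R) : R →* R) v, ?_⟩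
    rw [pow_succ', hv, hQ.mul_mul]
    congr 3
    push_cast
    ring_nf

/-- The underlying space `⨁ⱼ (A ∩ Q_{jn})` of the `n`-th Veronese of `A`. -/
noncomputable def veroneseSubmodule (ι : R →ₐ[k] Q) (t : Qˣ) (A : Subalgebra k Q) (n : ℕ) :
    Submodule k Q :=
  ⨆ j : ℕ, (A.toSubmodule ⊓ laurentComp ι t ((j : ℤ) * n))

lemma veroneseSubmodule_le (ι : R →ₐ[k] Q) (t : Qˣ) (A : Subalgebra k Q) (n : ℕ) :
    veroneseSubmodule ι t A n ≤ A.toSubmodule :=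
  iSup_le fun _ => inf_le_left

lemma IsSkewLaurent.veroneseSubmodule_mul_le {σ : R ≃ₐ[k] R} {ι : R →ₐ[k] Q} {t : Qˣ}
    (hQ : IsSkewLaurent k σ ι t) (A : Subalgebra k Q) (n : ℕ) :
    veroneseSubmodule ι t A n * veroneseSubmodule ι t A n ≤ veroneseSubmodule ι t A n := by
  unfold veroneseSubmodule
  rw [Submodule.iSup_mul]
  refine iSup_le fun i => ?_
  rw [Submodule.mul_iSup]
  refine iSup_le fun j => ?_
  refine le_trans ?_ (le_iSup _ (i + j))
  rw [Submodule.mul_le]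
  rintro x ⟨hxA, r, rfl⟩ y ⟨hyA, s, rfl⟩
  refine ⟨A.mul_mem hxA hyA, mem_laurentComp.mpr ⟨r * (σ ^ (i * n)) s, ?_⟩⟩
  have := hQ.mul_mul (i * n) ((j : ℤ) * n) r s
  push_cast at this ⊢
  rw [add_mul]
  exact this.symm

end VeroneseAux

/-- Claim in the proof of Proposition 1.3: the Veronese of a big subalgebra is big. -/
theorem veronese_of_big_is_big (k R Q : Type*) [Field k] [CommRing R] [Algebra k R]
    [Ring Q] [Algebra k Q] (σ : R ≃ₐ[k] R) (ι : R →ₐ[k] Q) (t : Qˣ)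
    (hQ : IsSkewLaurent k σ ι t)
    (A : Subalgebra k Q) (hA : IsBigSub ι t A)
    (n : ℕ) (hn : 1 ≤ n) :
    ∃ C : Subalgebra k Q,
      C.toSubmodule = (⨆ j : ℕ, (A.toSubmodule ⊓ laurentComp ι t ((j : ℤ) * n))) ∧
      IsBigSub ι (t ^ n) C := by
  obtain ⟨⟨-, hneg⟩, hfin, m, hm, u, hu, M, -, hloc⟩ := hA
  have hle := veroneseSubmodule_le ι t A n
  have hone : (1 : Q) ∈ veroneseSubmodule ι t A n :=
    Submodule.mem_iSup_of_mem 0 ⟨A.one_mem, mem_laurentComp.mpr ⟨1, by simp⟩⟩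
  refine ⟨(veroneseSubmodule ι t A n).toSubalgebra hone fun x y hx hy =>
    hQ.veroneseSubmodule_mul_le A n (Submodule.mul_mem_mul hx hy), rfl, ⟨?_, ?_⟩, ?_, ?_⟩
  · change veroneseSubmodule ι t A n = ⨆ j : ℤ, (veroneseSubmodule ι t A n ⊓ _)
    refine le_antisymm (iSup_le fun j => ?_) (iSup_le fun j => inf_le_left)
    refine le_iSup_of_le (j : ℤ) (le_inf ?_ ?_)
    · exact le_iSup (fun j : ℕ => A.toSubmodule ⊓ laurentComp ι t ((j : ℤ) * n)) j
    · rw [laurentComp_pow]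
      exact inf_le_right
  · intro j hj
    rw [laurentComp_pow, eq_bot_iff, ← hneg (j * n) (mul_neg_of_neg_of_pos hj (by lia))]
    exact inf_le_inf_right _ hle
  · intro j
    rw [laurentComp_pow]
    have := hfin (j * n)
    exact Submodule.finiteDimensional_of_le (inf_le_inf_right _ hle)
  · lift m to ℕ using by lia
    obtain ⟨i, rfl⟩ : ∃ i, n = i + 1 := ⟨n - 1, by lia⟩
    obtain ⟨v, hv⟩ := hQ.exists_unit_pow m u i
    set v' : Rˣ := Units.map ((σ ^ m : R ≃ₐ[k] R) : R →* R) v with hv'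
    have key : ∀ r ∈ coeffSpace ι t A m, r * (v' : R) ∈ coeffSpace ι (t ^ (i + 1))
        ((veroneseSubmodule ι t A (i + 1)).toSubalgebra hone fun x y hx hy =>
          hQ.veroneseSubmodule_mul_le A (i + 1) (Submodule.mul_mem_mul hx hy)) m := by
      intro r hr
      have hA' := A.mul_mem hr (A.pow_mem hu i)
      change ι r * ((t ^ (m : ℤ) : Qˣ) : Q) * (ι u * ((t ^ (m : ℤ) : Qˣ) : Q)) ^ i ∈ A at hA'
      rw [hv, hQ.mul_mul] at hA'
      have he : (m : ℤ) + m * i = m * ((i + 1 : ℕ) : ℤ) := by push_cast; ring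
      rw [he] at hA'
      rw [mem_coeffSpace, ← zpow_natCast t (i + 1), ← zpow_mul, mul_comm ((i + 1 : ℕ) : ℤ)]
      exact Submodule.mem_iSup_of_mem m ⟨hA', mem_laurentComp.mpr ⟨_, rfl⟩⟩
    refine ⟨m, hm, u * v', by simpa using key u hu, ?_⟩
    refine exists_isLocalization_of_le (Algebra.adjoin_mono ?_) M
    rintro _ ⟨r, hr, rfl⟩
    -- `r u⁻¹ = (r v') (u v')⁻¹`
    refine ⟨r * v', key r hr, ?_⟩
    simp [mul_inv_rev, mul_assoc]
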